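/- Let G be a connected simple graph with n > 3 vertices, m edges, and maximum degree Δ(G). If Δ(G) < n − (2m − 3(n − 1))/(n − 3), then mc(G) = m − n + 2. -/

import Mathlib

open SimpleGraph Filter Real

/-- An edge-coloring `c` (colors on vertex pairs, only the values on edges matter)
of `G` is a monochromatic connection coloring (MC-coloring) if every two vertices
are joined by a path all of whose edges receive the same color. -/
def IsMCColoring {V : Type*} (G : SimpleGraph V) (c : Sym2 V → ℕ) : Prop :=
  ∀ u v : V, ∃ p : G.Walk u v, p.IsPath ∧ ∃ k : ℕ, ∀ e ∈ p.edges, c e = k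

/-- `mcNum G` is the maximum number of colors (counted on the edges of `G`)
used in an MC-coloring of `G`; it is `0` if `G` admits no MC-coloring
(in particular if `G` is disconnected). -/
noncomputable def mcNum {V : Type*} (G : SimpleGraph V) : ℕ :=
  sSup {k | ∃ c : Sym2 V → ℕ, IsMCColoring G c ∧ (Set.image c G.edgeSet).ncard = k}

open Classical in
/-- Number of vertices of a component. -/
noncomputable def compCard {V : Type*} [Fintype V] (H : SimpleGraph V)
    (C : H.ConnectedComponent) : ℕ :=
  (Finset.univ.filter (fun v => H.connectedComponentMk v = C)).card

open Classical in
lemma two_compCard_le {V : Type*} [Fintype V] (H : SimpleGraph V)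
    (C : H.ConnectedComponent) :
    2 * compCard H C ≤
      (∑ v ∈ Finset.univ.filter (fun v => H.connectedComponentMk v = C), H.degree v) + 2 := by
  have hc := C.connected_toSimpleGraph
  have h1 := hc.card_vert_le_card_edgeSet_add_one
  have h2 := C.toSimpleGraph.sum_degrees_eq_twice_card_edges
  have h3 : Nat.card C.toSimpleGraph.edgeSet = C.toSimpleGraph.edgeFinset.card := by
    rw [Nat.card_eq_fintype_card, SimpleGraph.edgeFinset_card]
  have h4 : Nat.card C = compCard H C := by
    unfold compCard
    rw [Nat.card_eq_fintype_card, Fintype.card_subtype]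
    congr 1
  have h5 : (∑ v : C, C.toSimpleGraph.degree v) =
      ∑ v ∈ Finset.univ.filter (fun v => H.connectedComponentMk v = C), H.degree v := by
    rw [Finset.sum_subtype (p := fun v => v ∈ C)
      (Finset.univ.filter (fun v => H.connectedComponentMk v = C))
      (fun v => by simp; rfl) (fun v => H.degree v)]
    apply Finset.sum_congr rfl
    intro v _
    rw [← SimpleGraph.card_neighborFinset_eq_degree, ← SimpleGraph.card_neighborFinset_eq_degree]
    apply Finset.card_bij (fun a _ => a.1)
    · intro a ha
      simp only [mem_neighborFinset] at ha ⊢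
      exact ha
    · intro a _ b _ h
      exact Subtype.ext h
    · intro b hb
      simp only [mem_neighborFinset] at hb
      refine ⟨⟨b, ?_⟩, ?_, rfl⟩
      · exact (C.mem_supp_congr_adj hb).1 v.2
      · simp only [mem_neighborFinset]
        exact hb
  omega

open Classical in
lemma degree_pos_or_compCard {V : Type*} [Fintype V] (H : SimpleGraph V) (v : V) :
    1 ≤ H.degree v ∨ compCard H (H.connectedComponentMk v) ≤ 1 := by
  by_cases h : 1 ≤ H.degree v
  · exact Or.inl h
  right
  have : Nonempty V := ⟨v⟩
  unfold compCard
  rw [Finset.card_le_one_iff_subset_singleton]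
  refine ⟨v, fun w hw => ?_⟩
  simp only [Finset.mem_filter, Finset.mem_univ, true_and, ConnectedComponent.eq] at hw
  obtain ⟨p⟩ := hw.symm
  cases p with
  | nil => simp
  | cons hadj q =>
    exfalso
    apply h
    exact (H.degree_pos_iff_exists_adj v).2 ⟨_, hadj⟩

open Classical in
lemma sum_comp {V : Type*} [Fintype V] (H : SimpleGraph V) (f : V → ℕ) :
    ∑ C : H.ConnectedComponent,
      ∑ v ∈ Finset.univ.filter (fun v => H.connectedComponentMk v = C), f v = ∑ v, f v :=
  Finset.sum_fiberwise _ _ _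

open Classical in
lemma waste_le {V : Type*} [Fintype V] (H : SimpleGraph V) (hH : 1 ≤ H.edgeFinset.card) :
    (∑ C : H.ConnectedComponent, (compCard H C - 2)) + 1 ≤ H.edgeFinset.card := by
  have h2 := H.sum_degrees_eq_twice_card_edges
  rw [← sum_comp H (fun v => H.degree v)] at h2
  obtain ⟨e, he⟩ := Finset.card_pos.1 hH
  induction e with
  | h a b =>
  have hab : H.Adj a b := by simpa using he
  have hlt : ∑ C : H.ConnectedComponent, 2 * (compCard H C - 2) + 2 ≤ 
      ∑ C : H.ConnectedComponent,
      ∑ v ∈ Finset.univ.filter (fun v => H.connectedComponentMk v = C), H.degree v := by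
    rw [← Finset.add_sum_erase _ _ (Finset.mem_univ (H.connectedComponentMk a)),
      ← Finset.add_sum_erase (a := H.connectedComponentMk a) _ (fun C : H.ConnectedComponent => 
      ∑ v ∈ Finset.univ.filter (fun v => H.connectedComponentMk v = C), H.degree v)
        (Finset.mem_univ _)]
    have h3 : ∑ C ∈ Finset.univ.erase (H.connectedComponentMk a), 2 * (compCard H C - 2) ≤
        ∑ C ∈ Finset.univ.erase (H.connectedComponentMk a),
        ∑ v ∈ Finset.univ.filter (fun v => H.connectedComponentMk v = C), H.degree v := by
      apply Finset.sum_le_sum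
      intro C _
      have := two_compCard_le H C
      omega
    have h4 := two_compCard_le H (H.connectedComponentMk a)
    have h5 : 2 ≤ compCard H (H.connectedComponentMk a) := by
      have h6 : ({a, b} : Finset V) ⊆
        Finset.univ.filter (fun v => H.connectedComponentMk v = H.connectedComponentMk a) := by
        intro w hw
        simp only [Finset.mem_insert, Finset.mem_singleton] at hw
        simp only [Finset.mem_filter, Finset.mem_univ, true_and, ConnectedComponent.eq]
        rcases hw with rfl | rfl
        · exact Reachable.refl _
        · exact hab.symm.reachable
      have h7 := Finset.card_le_card h6
      rw [Finset.card_pair hab.ne] at h7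
      exact h7
    omega
  rw [← Finset.mul_sum] at hlt
  omega

/-- The color class graph. -/
def colorGraph {V : Type*} (G : SimpleGraph V) (c : Sym2 V → ℕ) (k : ℕ) : SimpleGraph V where
  Adj u v := G.Adj u v ∧ c s(u, v) = k
  symm := ⟨fun u v h => ⟨h.1.symm, by rw [Sym2.eq_swap]; exact h.2⟩⟩
  loopless := ⟨fun v h => G.loopless.irrefl v h.1⟩

lemma colorGraph_reachable {V : Type*} (G : SimpleGraph V) (c : Sym2 V → ℕ) (k : ℕ)
    {u v : V} (p : G.Walk u v) (hp : ∀ e ∈ p.edges, c e = k) :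
    (colorGraph G c k).Reachable u v := by
  induction p with
  | nil => exact Reachable.refl _
  | cons h q ih =>
    have h1 := hp _ (by rw [Walk.edges_cons]; exact List.mem_cons_self)
    have h2 : (colorGraph G c k).Adj _ _ := ⟨h, h1⟩
    exact h2.reachable.trans (ih (fun e he => hp e (by
      rw [Walk.edges_cons]; exact List.mem_cons_of_mem _ he)))

open Classical in
/-- Non-neighbours in the same component. -/
noncomputable def nonNb {V : Type*} [Fintype V] (G H : SimpleGraph V) (v : V) : ℕ :=
  (Finset.univ.filter (fun w => H.connectedComponentMk w = H.connectedComponentMk v ∧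
    w ≠ v ∧ ¬ G.Adj v w)).card

open Classical in
lemma nonNb_le {V : Type*} [Fintype V] (G H : SimpleGraph V) (hle : H ≤ G) (v : V) :
    nonNb G H v + 1 + H.degree v ≤ compCard H (H.connectedComponentMk v) := by
  unfold nonNb compCard
  rw [← SimpleGraph.card_neighborFinset_eq_degree]
  have h1 : (insert v (H.neighborFinset v)).card = 1 + (H.neighborFinset v).card := by
    rw [Finset.card_insert_of_notMem (by simp)]; omega
  rw [add_assoc, ← h1, ← Finset.card_union_of_disjoint]
  · apply Finset.card_le_card
    intro w hw
    simp only [Finset.mem_union, Finset.mem_filter, Finset.mem_univ, true_and, Finset.mem_insert,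
      mem_neighborFinset] at hw ⊢
    rcases hw with hw | rfl | hw
    · exact hw.1
    · rfl
    · exact ConnectedComponent.eq.2 hw.symm.reachable
  · rw [Finset.disjoint_left]
    intro w hw hw'
    simp only [Finset.mem_filter, Finset.mem_univ, true_and, Finset.mem_insert,
      mem_neighborFinset] at hw hw'
    rcases hw' with h | h
    · exact hw.2.1 h
    · exact hw.2.2 (hle h)

open Classical in
lemma sum_nonNb_le {V : Type*} [Fintype V] (G H : SimpleGraph V) (hle : H ≤ G)
    (C : H.ConnectedComponent) :
    ∑ v ∈ Finset.univ.filter (fun v => H.connectedComponentMk v = C), nonNb G H v ≤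
      (compCard H C - 1) * (compCard H C - 2) := by
  have h1 := two_compCard_le H C
  have h2 : ∑ v ∈ Finset.univ.filter (fun v => H.connectedComponentMk v = C),
      (nonNb G H v + 1 + H.degree v) ≤
      ∑ v ∈ Finset.univ.filter (fun v => H.connectedComponentMk v = C), compCard H C := by
    apply Finset.sum_le_sum
    intro v hv
    have := nonNb_le G H hle v
    rw [(Finset.mem_filter.1 hv).2] at this
    exact this
  rw [Finset.sum_add_distrib, Finset.sum_add_distrib, Finset.sum_const, Finset.sum_const] at h2
  change _ + compCard H C • 1 + _ ≤ compCard H C • compCard H C at h2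
  simp only [smul_eq_mul, mul_one] at h2
  have h0 : 1 ≤ compCard H C := by
    obtain ⟨v, hv⟩ := C.exists_rep
    exact Finset.card_pos.2 ⟨v, Finset.mem_filter.2 ⟨Finset.mem_univ _, hv⟩⟩
  generalize compCard H C = t at *
  obtain ⟨s, rfl⟩ : ∃ s, t = s + 1 := ⟨t - 1, by omega⟩
  cases s with
  | zero => omega
  | succ r =>
    simp only [Nat.add_sub_cancel, show r + 1 + 1 - 2 = r by omega] at *
    nlinarith

open Classical in
lemma upper {V : Type*} [Fintype V] (G : SimpleGraph V) 
    (hn : 3 < Fintype.card V) (c : Sym2 V → ℕ) (hc : IsMCColoring G c)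
    (hW : G.edgeFinset.card + 3 ≤ (G.edgeFinset.image c).card + Fintype.card V) :
    Fintype.card V * (Fintype.card V - 1) ≤
      2 * G.edgeFinset.card + (G.maxDegree - 1) * (Fintype.card V - 3) := by
  set n := Fintype.card V with hndef
  set K := G.edgeFinset.image c with hK
  let H := colorGraph G c
  have hle : ∀ k, H k ≤ G := fun k u v h => h.1
  have hedge : ∀ k, (H k).edgeFinset = G.edgeFinset.filter (fun e => c e = k) := by
    intro k
    ext e
    induction e with
    | h a b =>
      simp only [mem_edgeFinset, mem_edgeSet, Finset.mem_filter]
      rfl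
  have hsumE : ∑ k ∈ K, (H k).edgeFinset.card = G.edgeFinset.card := by
    rw [Finset.card_eq_sum_card_image c G.edgeFinset]
    exact Finset.sum_congr rfl (fun k _ => by rw [hedge])
  have hWs : ∑ k ∈ K, (∑ C : (H k).ConnectedComponent, (compCard (H k) C - 2)) ≤ n - 3 := by
    have h1 : ∑ k ∈ K, ((∑ C : (H k).ConnectedComponent, (compCard (H k) C - 2)) + 1) ≤
        ∑ k ∈ K, (H k).edgeFinset.card := by
      apply Finset.sum_le_sum
      intro k hk
      apply waste_le
      rw [hedge]
      obtain ⟨e, he, hek⟩ := Finset.mem_image.1 hk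
      exact Finset.card_pos.2 ⟨e, Finset.mem_filter.2 ⟨he, hek⟩⟩
    rw [Finset.sum_add_distrib, hsumE, Finset.sum_const] at h1
    simp only [smul_eq_mul, mul_one] at h1
    omega
  have hvert : ∀ v, n ≤ (∑ k ∈ K, nonNb G (H k) v) + 1 + G.degree v := by
    intro v
    have h1 : (Finset.univ : Finset V) ⊆ (K.biUnion (fun k => Finset.univ.filter
        (fun w => (H k).connectedComponentMk w = (H k).connectedComponentMk v ∧
        w ≠ v ∧ ¬ G.Adj v w))) ∪ {v} ∪ G.neighborFinset v := by
      intro w _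
      simp only [Finset.mem_union, Finset.mem_biUnion, Finset.mem_filter, Finset.mem_univ,
        true_and, Finset.mem_singleton, mem_neighborFinset]
      by_cases hwv : w = v
      · exact Or.inl (Or.inr hwv)
      by_cases ha : G.Adj v w
      · exact Or.inr ha
      left; left
      obtain ⟨p, -, k, hp⟩ := hc v w
      refine ⟨k, ?_, ConnectedComponent.eq.2 (colorGraph_reachable G c k p hp).symm, hwv, ha⟩
      cases p with
      | nil => exact absurd rfl hwv
      | cons h q =>
        rw [hK, Finset.mem_image]
        exact ⟨_, mem_edgeFinset.2 h, hp _ (by rw [Walk.edges_cons]; exact List.mem_cons_self)⟩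
    have h2 := Finset.card_le_card h1
    have h3 := Finset.card_union_le (K.biUnion (fun k => Finset.univ.filter
        (fun w => (H k).connectedComponentMk w = (H k).connectedComponentMk v ∧
        w ≠ v ∧ ¬ G.Adj v w)) ∪ {v}) (G.neighborFinset v)
    have h4 := Finset.card_union_le (K.biUnion (fun k => Finset.univ.filter
        (fun w => (H k).connectedComponentMk w = (H k).connectedComponentMk v ∧
        w ≠ v ∧ ¬ G.Adj v w))) {v}
    have h5 : _ ≤ ∑ k ∈ K, nonNb G (H k) v := Finset.card_biUnion_le (s := K)
      (t := fun k => Finset.univ.filter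
        (fun w => (H k).connectedComponentMk w = (H k).connectedComponentMk v ∧
        w ≠ v ∧ ¬ G.Adj v w))
    rw [Finset.card_univ] at h2
    rw [Finset.card_singleton] at h4
    rw [G.card_neighborFinset_eq_degree] at h3
    omega
  have hN : ∀ k v, nonNb G (H k) v ≤ compCard (H k) ((H k).connectedComponentMk v) - 2 := by
    intro k v
    have h1 := nonNb_le G (H k) (hle k) v
    have h2 := degree_pos_or_compCard (H k) v
    omega
  have hx : ∀ k ∈ K, ∀ C : (H k).ConnectedComponent, compCard (H k) C - 2 + 2 ≤ G.maxDegree := by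
    intro k hk C
    by_cases hC : ∃ v, (H k).connectedComponentMk v ≠ C
    · obtain ⟨v, hv⟩ := hC
      have h1 : ∑ j ∈ K, (nonNb G (H j) v + if j = k then compCard (H k) C - 2 else 0) ≤
          ∑ j ∈ K, (∑ C : (H j).ConnectedComponent, (compCard (H j) C - 2)) := by
        apply Finset.sum_le_sum
        intro j _
        have h2 := hN j v
        split_ifs with hjk
        · subst hjk
          have h3 := Finset.sum_le_sum_of_subset
            (f := fun C : (H j).ConnectedComponent => compCard (H j) C - 2)
            (Finset.subset_univ {(H j).connectedComponentMk v, C})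
          rw [Finset.sum_pair hv] at h3
          omega
        · have h3 := Finset.single_le_sum (s := Finset.univ)
            (f := fun C : (H j).ConnectedComponent => compCard (H j) C - 2)
            (fun _ _ => Nat.zero_le _) (Finset.mem_univ ((H j).connectedComponentMk v))
          omega
      rw [Finset.sum_add_distrib, Finset.sum_ite_eq' K k, if_pos hk] at h1
      have h4 := hvert v
      have h5 := G.degree_le_maxDegree v
      omega
    · exfalso
      push Not at hC
      have h1 : compCard (H k) C = n := by
        unfold compCard
        rw [Finset.filter_true_of_mem (fun v _ => hC v), Finset.card_univ]
      have h2 := Finset.single_le_sum (s := Finset.univ)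
            (f := fun C : (H k).ConnectedComponent => compCard (H k) C - 2)
            (fun _ _ => Nat.zero_le _) (Finset.mem_univ C)
      have h3 := Finset.single_le_sum (s := K)
            (f := fun k => ∑ C : (H k).ConnectedComponent, (compCard (H k) C - 2))
            (fun _ _ => Nat.zero_le _) hk
      omega
  have htot : n * (n - 1) ≤ (∑ v, ∑ k ∈ K, nonNb G (H k) v) + 2 * G.edgeFinset.card := by
    rw [← G.sum_degrees_eq_twice_card_edges, ← Finset.sum_add_distrib]
    calc n * (n - 1) = ∑ v : V, (n - 1) := by simp [hndef]
      _ ≤ _ := Finset.sum_le_sum (fun v _ => by have := hvert v; omega)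
  rw [Finset.sum_comm] at htot
  have hfin : ∑ k ∈ K, ∑ v, nonNb G (H k) v ≤ (G.maxDegree - 1) * (n - 3) := by
    calc _ ≤ ∑ k ∈ K, (G.maxDegree - 1) *
          (∑ C : (H k).ConnectedComponent, (compCard (H k) C - 2)) := by
          apply Finset.sum_le_sum
          intro k hk
          rw [← sum_comp (H k), Finset.mul_sum]
          apply Finset.sum_le_sum
          intro C _
          refine (sum_nonNb_le G (H k) (hle k) C).trans ?_
          apply Nat.mul_le_mul_right
          have := hx k hk C
          omega
      _ = (G.maxDegree - 1) *
          ∑ k ∈ K, (∑ C : (H k).ConnectedComponent, (compCard (H k) C - 2)) := by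
          rw [Finset.mul_sum]
      _ ≤ _ := Nat.mul_le_mul_left _ hWs
  omega

open Classical in
lemma lower {V : Type*} [Fintype V] (G : SimpleGraph V) (hG : G.Connected)
    (hn : 3 < Fintype.card V) : ∃ c : Sym2 V → ℕ, IsMCColoring G c ∧
      (G.edgeFinset.image c).card + Fintype.card V = G.edgeFinset.card + 2 := by
  obtain ⟨T, hTG, hT⟩ := hG.exists_isTree_le
  have hTc : T.edgeFinset.card + 1 = Fintype.card V := hT.card_edgeFinset
  let f := Fintype.equivFin (Sym2 V)
  let c : Sym2 V → ℕ := fun e => if e ∈ T.edgeFinset then 0 else (f e : ℕ) + 1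
  refine ⟨c, ?_, ?_⟩
  · intro u v
    obtain ⟨p, hp⟩ := (hT.connected u v).exists_isPath
    refine ⟨p.mapLe hTG, (Walk.isPath_mapLe hTG).2 hp, 0, ?_⟩
    intro e he
    rw [Walk.edges_mapLe_eq_edges] at he
    have := p.edges_subset_edgeSet he
    simp [c, this]
  · have hsub : T.edgeFinset ⊆ G.edgeFinset := edgeFinset_subset_edgeFinset.2 hTG
    have h1 : G.edgeFinset.image c = insert 0 ((G.edgeFinset \ T.edgeFinset).image c) := by
      rw [← Finset.sdiff_union_of_subset hsub, Finset.image_union]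
      have : T.edgeFinset.image c = {0} := by
        ext k
        simp only [Finset.mem_image, Finset.mem_singleton]
        constructor
        · rintro ⟨e, he, rfl⟩
          exact if_pos he
        · rintro rfl
          obtain ⟨e, he⟩ := Finset.card_pos.1 (show 0 < T.edgeFinset.card by omega)
          exact ⟨e, he, if_pos he⟩
      rw [this, Finset.union_comm, ← Finset.insert_eq, Finset.sdiff_union_of_subset hsub]
    have h2 : ((G.edgeFinset \ T.edgeFinset).image c).card =
        (G.edgeFinset \ T.edgeFinset).card := by
      apply Finset.card_image_of_injOn
      intro a ha b hb hab
      have ha' := (Finset.mem_sdiff.1 ha).2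
      have hb' := (Finset.mem_sdiff.1 hb).2
      simp only [c, if_neg ha', if_neg hb'] at hab
      exact f.injective (Fin.ext (by omega))
    rw [h1, Finset.card_insert_of_notMem, h2, Finset.card_sdiff_of_subset hsub]
    · have := Finset.card_le_card hsub
      omega
    · simp only [Finset.mem_image, not_exists, not_and]
      intro e he
      simp only [c, if_neg (Finset.mem_sdiff.1 he).2]
      omega

/-- If `G` is a connected graph with `n > 3` vertices, `m` edges, and maximum
degree `Δ(G) < n - (2m - 3(n-1))/(n-3)`, then `mc(G) = m - n + 2`. -/
theorem mc_eq_of_maxDegree_lt {V : Type*} [Fintype V] [DecidableEq V]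
    (G : SimpleGraph V) [DecidableRel G.Adj] (hG : G.Connected)
    (hn : 3 < Fintype.card V)
    (hΔ : (G.maxDegree : ℝ) <
      (Fintype.card V : ℝ) -
        (2 * (G.edgeFinset.card : ℝ) - 3 * ((Fintype.card V : ℝ) - 1)) /
          ((Fintype.card V : ℝ) - 3)) :
    (mcNum G : ℤ) = (G.edgeFinset.card : ℤ) - (Fintype.card V : ℤ) + 2 := by

  classical
  have key : ∀ c : Sym2 V → ℕ, (Set.image c G.edgeSet).ncard = (G.edgeFinset.image c).card := by
    intro c
    rw [← Set.ncard_coe_finset, Finset.coe_image, coe_edgeFinset]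
  have hn' : (4 : ℝ) ≤ Fintype.card V := by exact_mod_cast hn
  have hup : ∀ c : Sym2 V → ℕ, IsMCColoring G c →
      (G.edgeFinset.image c).card + Fintype.card V ≤ G.edgeFinset.card + 2 := by
    intro c hc
    by_contra hcon
    have h := upper G hn c hc (by convert (show G.edgeFinset.card + 3 ≤ (G.edgeFinset.image c).card + Fintype.card V by omega))
    have h' : Fintype.card V * (Fintype.card V - 1) ≤
      2 * G.edgeFinset.card + (G.maxDegree - 1) * (Fintype.card V - 3) := by
      convert h
    have hd : 1 ≤ G.maxDegree := by
      have : Nontrivial V := Fintype.one_lt_card_iff_nontrivial.1 (by omega)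
      obtain ⟨v⟩ := hG.nonempty
      exact (hG.preconnected.degree_pos_of_nontrivial v).trans_le (G.degree_le_maxDegree v)
    have hR : (Fintype.card V : ℝ) * (Fintype.card V - 1) ≤
      2 * G.edgeFinset.card + (G.maxDegree - 1) * (Fintype.card V - 3) := by
      have h3 : ((Fintype.card V - 1 : ℕ) : ℝ) = Fintype.card V - 1 := by
        rw [Nat.cast_sub (by omega)]; simp
      have h4 : ((Fintype.card V - 3 : ℕ) : ℝ) = Fintype.card V - 3 := by
        rw [Nat.cast_sub (by omega)]; simp
      have h5 : ((G.maxDegree - 1 : ℕ) : ℝ) = G.maxDegree - 1 := by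
        rw [Nat.cast_sub hd]; simp
      rw [← h3, ← h4, ← h5]
      exact_mod_cast h'
    have hpos : (0 : ℝ) < Fintype.card V - 3 := by linarith
    rw [lt_sub_comm, div_lt_iff₀ hpos] at hΔ
    nlinarith
  obtain ⟨c, hc, hcard⟩ := lower G hG hn
  have hcard' : (G.edgeFinset.image c).card + Fintype.card V = G.edgeFinset.card + 2 := by
    convert hcard
  have hgr : IsGreatest {k | ∃ c : Sym2 V → ℕ, IsMCColoring G c ∧
      (Set.image c G.edgeSet).ncard = k} (G.edgeFinset.image c).card := by
    refine ⟨⟨c, hc, key c⟩, ?_⟩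
    rintro k ⟨d, hd, rfl⟩
    rw [key d]
    have := hup d hd
    omega
  have : mcNum G = (G.edgeFinset.image c).card := hgr.csSup_eq
  rw [this]
  omega
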